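/- In the randomized controlled trial model with responses, for every attribute a : N → {0,1} with 0 < |a| and every position k ∈ {1,…,s}: Pr(R_k = 1 | A_k = 1) = (t/s)·(1/|a|)·Σ_{i : a(i)=1} τ_i + (1 − t/s)·(1/|a|)·Σ_{i : a(i)=1} ν_i, where A_k = a(i_k) and |a| = #{i : a(i)=1}. -/

import Mathlib

/- Randomized controlled trial model with responses:
   a uniformly random injective s-tuple of individuals from `Fin n`
   (encoded as `Fin s ↪ Fin n`), an independent uniformly random t-element
   subset of positions `Fin s` (the treated positions), and, given these,
   independent Bernoulli responses at each position: position `k` responds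
   with probability `τ (i_k)` if treated and `ν (i_k)` if untreated. -/

open Finset BigOperators
open scoped Classical

namespace RCT

/-- Probability weight of a sample point `(σ, T, R)`. -/
noncomputable def w (n s t : ℕ) (τ ν : Fin n → ℝ)
    (ω : (Fin s ↪ Fin n) × Finset (Fin s) × (Fin s → Bool)) : ℝ :=
  ((Fintype.card (Fin s ↪ Fin n) : ℝ))⁻¹ *
    (if ω.2.1.card = t then ((s.choose t : ℝ))⁻¹ else 0) *
    ∏ k : Fin s,
      (if ω.2.2 k = true
        then (if k ∈ ω.2.1 then τ (ω.1 k) else ν (ω.1 k))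
        else 1 - (if k ∈ ω.2.1 then τ (ω.1 k) else ν (ω.1 k)))

/-- Probability of an event. -/
noncomputable def Pr (n s t : ℕ) (τ ν : Fin n → ℝ)
    (E : (Fin s ↪ Fin n) × Finset (Fin s) × (Fin s → Bool) → Prop) : ℝ :=
  ∑ ω : (Fin s ↪ Fin n) × Finset (Fin s) × (Fin s → Bool),
    if E ω then w n s t τ ν ω else 0

/-- Conditional probability `Pr (E | F)`. -/
noncomputable def cPr (n s t : ℕ) (τ ν : Fin n → ℝ)
    (E F : (Fin s ↪ Fin n) × Finset (Fin s) × (Fin s → Bool) → Prop) : ℝ :=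
  Pr n s t τ ν (fun ω => E ω ∧ F ω) / Pr n s t τ ν F

/-- Expectation of a real-valued random variable. -/
noncomputable def Ex (n s t : ℕ) (τ ν : Fin n → ℝ)
    (f : (Fin s ↪ Fin n) × Finset (Fin s) × (Fin s → Bool) → ℝ) : ℝ :=
  ∑ ω : (Fin s ↪ Fin n) × Finset (Fin s) × (Fin s → Bool), w n s t τ ν ω * f ω

/- The sampled individual at position `k` is uniform on the population because permutations of the
population act transitively on it and preserve the uniform law on injective tuples; the position is
treated with probability `t / s` by counting `t`-subsets; and the other responses sum out of the
product weight. Bernoulli weights are affine in their parameter, so averaging over the treatment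
leaves one Bernoulli response at the mixed rate, and conditioning on `A_k = 1` makes the individual
uniform on `{i | a i = 1}`. -/

section Expect

variable {X Y M : Type*} [Fintype X] [Fintype Y] [AddCommMonoid M] [Module ℚ≥0 M]

theorem expect_comp_eq_expect_of_card_fiber_eq [DecidableEq Y] [Nonempty X] {f : X → Y}
    (hf : ∀ y y', #{x | f x = y} = #{x | f x = y'}) (g : Y → M) :
    𝔼 x, g (f x) = 𝔼 y, g y := by
  obtain ⟨x₀⟩ := ‹Nonempty X›
  set c := #{x | f x = f x₀}
  have hc₀ : (c : ℚ≥0) ≠ 0 := by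
    exact_mod_cast (card_pos.mpr ⟨x₀, by simp⟩).ne'
  have card_eq : Fintype.card X = Fintype.card Y * c := by
    rw [← card_univ, card_eq_sum_card_fiberwise fun x _ ↦ mem_univ (f x),
      sum_congr rfl fun y _ ↦ hf y (f x₀), sum_const, card_univ, smul_eq_mul]
  have sum_eq : ∑ x, g (f x) = (c : ℚ≥0) • ∑ y, g y := by
    rw [← sum_fiberwise univ f, smul_sum]
    refine sum_congr rfl fun y _ ↦ ?_
    rw [sum_congr rfl fun x hx ↦ congrArg g (mem_filter.mp hx).2, sum_const, hf y (f x₀),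
      Nat.cast_smul_eq_nsmul]
  rw [expect_univ, expect_univ, sum_eq, card_eq, smul_smul, Nat.cast_mul, mul_inv,
    inv_mul_cancel_right₀ hc₀]

theorem card_embedding_fiber_eq [DecidableEq Y] (k : X) (y y' : Y) :
    #{σ : X ↪ Y | σ k = y} = #{σ : X ↪ Y | σ k = y'} := by
  refine card_equiv ((Equiv.refl X).embeddingCongr (Equiv.swap y y')) fun σ ↦ ?_
  simp [Equiv.swap_apply_eq_iff]

theorem expect_embedding_apply [Nonempty (X ↪ Y)] (k : X) (g : Y → M) :
    𝔼 σ : X ↪ Y, g (σ k) = 𝔼 y, g y :=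
  expect_comp_eq_expect_of_card_fiber_eq (card_embedding_fiber_eq k) g

end Expect

theorem card_filter_mem_powersetCard_mul {α : Type*} [DecidableEq α] {u : Finset α} {k : α}
    (hk : k ∈ u) (t : ℕ) :
    #{T ∈ powersetCard t u | k ∈ T} * #u = t * (#u).choose t := by
  obtain _ | t := t
  · simp [filter_singleton]
  have hcard := card_filter_powersetCard_subset {k} u (t + 1) (by simpa using hk) (by simp)
  simp only [singleton_subset_iff, card_singleton, Nat.add_sub_cancel] at hcard
  obtain ⟨m, hm⟩ := Nat.exists_eq_succ_of_ne_zero (card_pos.mpr ⟨k, hk⟩).ne'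
  rw [hcard, hm, Nat.succ_sub_one, mul_comm, Nat.add_one_mul_choose_eq, mul_comm]

theorem expect_powersetCard_ite_mem {α K : Type*} [DecidableEq α] [Field K] [CharZero K]
    {u : Finset α} {k : α} (hk : k ∈ u) {t : ℕ} (ht : t ≤ #u) (x y : K) :
    𝔼 T ∈ powersetCard t u, (if k ∈ T then x else y) =
      (t / #u : K) * x + (1 - t / #u) * y := by
  have hu : (#u : K) ≠ 0 := by exact_mod_cast (card_pos.mpr ⟨k, hk⟩).ne'
  have hchoose : ((#u).choose t : K) ≠ 0 := by exact_mod_cast (Nat.choose_pos ht).ne'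
  have hmem : (#{T ∈ powersetCard t u | k ∈ T} : K) = t / #u * (#u).choose t := by
    rw [div_mul_eq_mul_div, eq_div_iff hu]
    exact_mod_cast card_filter_mem_powersetCard_mul hk t
  have hnotMem : (#{T ∈ powersetCard t u | k ∉ T} : K) = (1 - t / #u) * (#u).choose t := by
    have := card_filter_add_card_filter_not (s := powersetCard t u) (k ∈ ·)
    rw [card_powersetCard] at this
    rw [sub_mul, one_mul, ← hmem, eq_sub_iff_add_eq']
    exact_mod_cast this
  rw [expect_eq_sum_div_card, sum_ite, sum_const, sum_const, card_powersetCard, nsmul_eq_mul,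
    nsmul_eq_mul, hmem, hnotMem]
  field_simp

theorem sum_filter_apply_prod_eq {ι R : Type*} {κ : ι → Type*} [Fintype ι] [DecidableEq ι]
    [∀ i, Fintype (κ i)] [CommSemiring R] {q : ∀ i, κ i → R} {k : ι}
    (hq : ∀ i ≠ k, ∑ b, q i b = 1) (P : κ k → Prop) [DecidablePred P] :
    ∑ x : ∀ i, κ i with P (x k), ∏ i, q i (x i) = ∑ b with P b, q k b := by
  let A : ∀ i, Finset (κ i) := Function.update (fun _ ↦ univ) k (univ.filter P)
  have hA : ({x | P (x k)} : Finset (∀ i, κ i)) = Fintype.piFinset A := by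
    ext x
    rw [Fintype.mem_piFinset, Function.forall_update_iff _ fun i a ↦ x i ∈ a]
    simp
  rw [hA, ← prod_univ_sum, prod_eq_single k]
  · simp [A]
  · intro i _ hi
    simpa [A, hi] using hq i hi
  · simp

/-- The mass function of a Bernoulli variable: `true` has weight `p` and `false` has weight `1 - p`.
It is defined for every real `p`, so that it is affine in `p`. -/
def bernoulliWeight (p : ℝ) (b : Bool) : ℝ := if b = true then p else 1 - p

theorem sum_bernoulliWeight (p : ℝ) : ∑ b, bernoulliWeight p b = 1 := by
  simp [bernoulliWeight]

theorem bernoulliWeight_mix (c p q : ℝ) (b : Bool) :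
    c * bernoulliWeight p b + (1 - c) * bernoulliWeight q b =
      bernoulliWeight (c * p + (1 - c) * q) b := by
  unfold bernoulliWeight
  split_ifs
  · rfl
  · ring

/-- The probability that individual `i` responds, given that `i` is in the sample: each position is
treated with probability `t / s`. -/
noncomputable def responseRate {n : ℕ} (s t : ℕ) (τ ν : Fin n → ℝ) (i : Fin n) : ℝ :=
  (t : ℝ) / s * τ i + (1 - (t : ℝ) / s) * ν i

section Model

variable {n s t : ℕ} {τ ν : Fin n → ℝ}

theorem pr_eq_expect (E : (Fin s ↪ Fin n) × Finset (Fin s) × (Fin s → Bool) → Prop) :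
    Pr n s t τ ν E = 𝔼 σ : Fin s ↪ Fin n, 𝔼 T ∈ powersetCard t univ,
      ∑ R : Fin s → Bool with E (σ, T, R),
        ∏ j, bernoulliWeight (if j ∈ T then τ (σ j) else ν (σ j)) (R j) := by
  rw [Pr, Fintype.sum_prod_type, Fintype.expect_eq_sum_div_card, sum_div]
  refine sum_congr rfl fun σ _ ↦ ?_
  rw [Fintype.sum_prod_type, expect_eq_sum_div_card, card_powersetCard, card_univ,
    Fintype.card_fin, ← univ_filter_card_eq, sum_filter, sum_div, sum_div]
  refine sum_congr rfl fun T _ ↦ ?_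
  by_cases hT : #T = t
  · simp only [w, hT, if_true, bernoulliWeight, ← sum_filter, ← mul_sum]
    ring
  · simp [w, hT]

theorem pr_individual_response (hts : t ≤ s) (hsn : s ≤ n) (k : Fin s)
    (Q : Fin n → Bool → Prop) :
    Pr n s t τ ν (fun ω ↦ Q (ω.1 k) (ω.2.2 k)) =
      𝔼 i, ∑ b with Q i b, bernoulliWeight (responseRate s t τ ν i) b := by
  have : Nonempty (Fin s ↪ Fin n) := ⟨Fin.castLEEmb hsn⟩
  rw [pr_eq_expect, ← expect_embedding_apply k fun i ↦
    ∑ b with Q i b, bernoulliWeight (responseRate s t τ ν i) b]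
  refine expect_congr rfl fun σ _ ↦ ?_
  calc 𝔼 T ∈ powersetCard t univ, ∑ R : Fin s → Bool with Q (σ k) (R k),
        ∏ j, bernoulliWeight (if j ∈ T then τ (σ j) else ν (σ j)) (R j)
      = 𝔼 T ∈ powersetCard t univ, ∑ b with Q (σ k) b,
          bernoulliWeight (if k ∈ T then τ (σ k) else ν (σ k)) b :=
        expect_congr rfl fun T _ ↦
          sum_filter_apply_prod_eq (fun j _ ↦ sum_bernoulliWeight _) (Q (σ k))
    _ = ∑ b with Q (σ k) b, 𝔼 T ∈ powersetCard t univ,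
          if k ∈ T then bernoulliWeight (τ (σ k)) b else bernoulliWeight (ν (σ k)) b := by
        simp only [expect_sum_comm, apply_ite bernoulliWeight, ite_apply]
    _ = ∑ b with Q (σ k) b, bernoulliWeight (responseRate s t τ ν (σ k)) b := by
        refine sum_congr rfl fun b _ ↦ ?_
        rw [expect_powersetCard_ite_mem (mem_univ k) (by simpa using hts), card_univ,
          Fintype.card_fin, bernoulliWeight_mix, responseRate]

theorem pr_individual (hts : t ≤ s) (hsn : s ≤ n) (k : Fin s) (P : Fin n → Prop)
    [DecidablePred P] :
    Pr n s t τ ν (fun ω ↦ P (ω.1 k)) = (#{i | P i} : ℝ) / n := by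
  rw [pr_individual_response hts hsn k fun i _ ↦ P i, Fintype.expect_eq_sum_div_card,
    Fintype.card_fin, ← sum_boole]
  congr! 2 with i
  by_cases hi : P i <;> simp [hi, sum_bernoulliWeight, -Fintype.univ_bool]

theorem pr_response_and_individual (hts : t ≤ s) (hsn : s ≤ n) (k : Fin s) (P : Fin n → Prop)
    [DecidablePred P] :
    Pr n s t τ ν (fun ω ↦ ω.2.2 k = true ∧ P (ω.1 k)) =
      (∑ i with P i, responseRate s t τ ν i) / n := by
  rw [pr_individual_response hts hsn k fun i b ↦ b = true ∧ P i, Fintype.expect_eq_sum_div_card,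
    Fintype.card_fin, sum_filter]
  congr! 2 with i
  by_cases hi : P i <;> simp [hi, bernoulliWeight, sum_filter]

theorem cPr_response_individual (hts : t ≤ s) (hsn : s ≤ n) (k : Fin s) (P : Fin n → Prop)
    [DecidablePred P] :
    cPr n s t τ ν (fun ω ↦ ω.2.2 k = true) (fun ω ↦ P (ω.1 k)) =
      (∑ i with P i, responseRate s t τ ν i) / #{i | P i} := by
  have hn : (n : ℝ) ≠ 0 := by exact_mod_cast (k.pos.trans_le hsn).ne'
  rw [cPr, pr_response_and_individual hts hsn, pr_individual hts hsn, div_div_div_cancel_right₀ hn]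

end Model

/-- `Pr(R_k = 1 | A_k = 1) = (t/s)·(1/|a|)·Σ_{i : a i = 1} τ i
      + (1 − t/s)·(1/|a|)·Σ_{i : a i = 1} ν i`. -/
theorem response_given_attribute_one (n s t : ℕ) (ht : 0 < t) (hts : t < s) (hsn : s ≤ n)
    (τ ν : Fin n → ℝ) (hτ : ∀ i, τ i ∈ Set.Icc (0 : ℝ) 1) (hν : ∀ i, ν i ∈ Set.Icc (0 : ℝ) 1)
    (a : Fin n → Fin 2) (ha : 0 < (univ.filter (fun i => a i = 1)).card) (k : Fin s) :
    cPr n s t τ ν (fun ω => ω.2.2 k = true) (fun ω => a (ω.1 k) = 1) =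
      ((t : ℝ) / s) * ((1 / ((univ.filter (fun i => a i = 1)).card : ℝ)) *
          ∑ i ∈ univ.filter (fun i => a i = 1), τ i) +
        (1 - (t : ℝ) / s) * ((1 / ((univ.filter (fun i => a i = 1)).card : ℝ)) *
          ∑ i ∈ univ.filter (fun i => a i = 1), ν i) := by
  rw [cPr_response_individual hts.le hsn k fun i ↦ a i = 1]
  simp only [responseRate, sum_add_distrib, ← mul_sum]
  ring

end RCT
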